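/- Let k ≥ 2 and n_1, …, n_k be positive integers, let t be the number of indices i with n_i odd, let I_1 = {i : n_i = 1}, and let I_2 = {i : n_i = 2}. If t is even and |I_1| + |I_2| ≤ t/2, then the signed domination number of the complete k-partite graph K_{n_1,…,n_k} is at least 4. -/

import Mathlib

open scoped Classical

/-- The signed domination number of a finite simple graph `G`: the minimum weight of a
function `f : V → {−1, 1}` such that `f(N[v]) ≥ 1` for every vertex `v`. -/
noncomputable def signedDomNum {V : Type*} [Fintype V] (G : SimpleGraph V) : ℤ :=
  sInf {w : ℤ | ∃ f : V → ℤ, (∀ v, f v = 1 ∨ f v = -1) ∧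
    (∀ v, 1 ≤ f v + ∑ u ∈ G.neighborFinset v, f u) ∧ w = ∑ v, f v}

/-!
Let `f` be a signed dominating function of weight `W` on a complete multipartite graph, and let
`S` be its weight on some part. The closed neighbourhood of a vertex `v` of that part has weight
`f v + W - S`. Hence a part that contains a vertex of value `-1` has `S ≤ W - 2`, whereas a part on
which `f` is constantly `1` has at most `W` vertices. Since `W ≡ t` modulo `2`, it suffices to
exclude `W ≤ 2`. In that case a part of odd size at least `3` has `S ≤ -1` by parity, a part of even
size at least `4` has `S ≤ 0`, and parts of sizes `1` and `2` have `S ≤ 1` and `S ≤ 2`. These bounds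
add up to `W ≤ 2 (|I₁| + |I₂|) - t ≤ 0`. But then `S ≤ W ≤ 0` on every part, so each part contains a
vertex of value `-1`; a single part already has `S ≤ W - 2`, and the total cannot reach `W`.
-/

theorem even_sum_sign_iff {ι : Type*} [Fintype ι] {f : ι → ℤ} (hf : ∀ i, f i = 1 ∨ f i = -1) :
    Even (∑ i, f i) ↔ Even (Fintype.card ι) := by
  have hdiff : Even (∑ i, (f i - 1)) := by
    refine Finset.even_sum _ fun i _ => ?_
    rcases hf i with h | h <;> rw [h] <;> decide
  rw [Finset.sum_sub_distrib, Int.even_sub] at hdiff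
  simpa using hdiff

/-- A signed dominating function of `G`: its values are `1` and `-1`, and its sum over each closed
neighbourhood, written as a vertex together with its open neighbourhood, is positive. -/
structure IsSignedDominating {V : Type*} [Fintype V] (G : SimpleGraph V) (f : V → ℤ) : Prop where
  eq_one_or_eq_neg_one : ∀ v, f v = 1 ∨ f v = -1
  one_le_add_sum_neighborFinset : ∀ v, 1 ≤ f v + ∑ u ∈ G.neighborFinset v, f u

theorem isSignedDominating_one {V : Type*} [Fintype V] (G : SimpleGraph V) :
    IsSignedDominating G fun _ => 1 :=
  ⟨by simp, by simp⟩

theorem le_signedDomNum {V : Type*} [Fintype V] {G : SimpleGraph V} {c : ℤ}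
    (h : ∀ f, IsSignedDominating G f → c ≤ ∑ v, f v) : c ≤ signedDomNum G := by
  have hone := isSignedDominating_one G
  refine le_csInf ⟨_, _, hone.1, hone.2, rfl⟩ ?_
  rintro _ ⟨f, hsign, hdom, rfl⟩
  exact h f ⟨hsign, hdom⟩

section CompleteMultipartite

open SimpleGraph

variable {ι : Type*} [Fintype ι] {V : ι → Type*} [∀ i, Fintype (V i)]

theorem sum_neighborFinset_completeMultipartiteGraph {M : Type*} [AddCommGroup M]
    (f : (Σ i, V i) → M) (v : Σ i, V i) [Fintype ((completeMultipartiteGraph V).neighborSet v)] :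
    ∑ u ∈ (completeMultipartiteGraph V).neighborFinset v, f u
      = ∑ u, f u - ∑ j, f ⟨v.1, j⟩ := by
  have hcompl : (completeMultipartiteGraph V).neighborFinset v
      = (Finset.univ.map (Function.Embedding.sigmaMk v.1))ᶜ := by
    ext ⟨i, j⟩
    simp only [mem_neighborFinset, comap_adj, top_adj, Finset.mem_compl, Finset.mem_map,
      Finset.mem_univ, true_and, Function.Embedding.sigmaMk_apply, Sigma.mk.injEq]
    constructor
    · rintro hne ⟨_, rfl, _⟩
      exact hne rfl
    · rintro hnot rfl
      exact hnot ⟨j, rfl, HEq.rfl⟩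
  rw [hcompl, eq_sub_iff_add_eq,
    ← Finset.sum_compl_add_sum (Finset.univ.map (Function.Embedding.sigmaMk v.1)), Finset.sum_map]
  rfl

namespace IsSignedDominating

variable {f : (Σ i, V i) → ℤ}

theorem even_sum_part_iff (hf : IsSignedDominating (completeMultipartiteGraph V) f) (i : ι) :
    Even (∑ j, f ⟨i, j⟩) ↔ Even (Fintype.card (V i)) :=
  even_sum_sign_iff fun j => hf.eq_one_or_eq_neg_one ⟨i, j⟩

theorem even_sum_iff (hf : IsSignedDominating (completeMultipartiteGraph V) f) :
    Even (∑ v, f v) ↔ Even (Finset.univ.filter fun i => Odd (Fintype.card (V i))).card := by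
  rw [even_sum_sign_iff hf.eq_one_or_eq_neg_one, Fintype.card_sigma,
    Finset.even_sum_iff_even_card_odd]

theorem sum_part_lt_add (hf : IsSignedDominating (completeMultipartiteGraph V) f)
    (i : ι) (j : V i) : ∑ l, f ⟨i, l⟩ < f ⟨i, j⟩ + ∑ v, f v := by
  have hv := hf.one_le_add_sum_neighborFinset ⟨i, j⟩
  rw [sum_neighborFinset_completeMultipartiteGraph] at hv
  linarith

theorem sum_part_le (hf : IsSignedDominating (completeMultipartiteGraph V) f)
    (i : ι) [Nonempty (V i)] : ∑ j, f ⟨i, j⟩ ≤ ∑ v, f v := by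
  obtain ⟨j⟩ := ‹Nonempty (V i)›
  have hlt := hf.sum_part_lt_add i j
  rcases hf.eq_one_or_eq_neg_one ⟨i, j⟩ with h | h <;> omega

theorem sum_part_eq_card_or_le_sub_two (hf : IsSignedDominating (completeMultipartiteGraph V) f)
    (i : ι) : ∑ j, f ⟨i, j⟩ = Fintype.card (V i) ∨ ∑ j, f ⟨i, j⟩ ≤ ∑ v, f v - 2 := by
  by_cases hone : ∀ j, f ⟨i, j⟩ = 1
  · exact Or.inl (by simp [hone])
  · obtain ⟨j, hj⟩ := not_forall.mp hone
    have hlt := hf.sum_part_lt_add i j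
    have hneg := (hf.eq_one_or_eq_neg_one ⟨i, j⟩).resolve_left hj
    exact Or.inr (by omega)

theorem sum_pos (hf : IsSignedDominating (completeMultipartiteGraph V) f)
    [Nonempty (Σ i, V i)] : 0 < ∑ v, f v := by
  by_contra! hW
  have hnonpos (i : ι) : ∑ j, f ⟨i, j⟩ ≤ 0 := by
    cases isEmpty_or_nonempty (V i)
    · simp
    · exact (hf.sum_part_le i).trans hW
  obtain ⟨i, j⟩ := ‹Nonempty (Σ i, V i)›
  have hle : ∑ v, f v ≤ ∑ l, f ⟨i, l⟩ := by
    rw [Fintype.sum_sigma, ← Finset.add_sum_erase _ _ (Finset.mem_univ i)]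
    exact add_le_of_nonpos_right (Finset.sum_nonpos fun i' _ => hnonpos i')
  have hcard : 0 < Fintype.card (V i) := Fintype.card_pos_iff.mpr ⟨j⟩
  have hpart := hnonpos i
  rcases hf.sum_part_eq_card_or_le_sub_two i with h | h <;> omega

theorem sum_part_le_of_sum_le_two (hf : IsSignedDominating (completeMultipartiteGraph V) f)
    (hW : ∑ v, f v ≤ 2) (i : ι) :
    ∑ j, f ⟨i, j⟩ ≤ 2 * ((if Fintype.card (V i) = 1 then 1 else 0)
      + (if Fintype.card (V i) = 2 then 1 else 0)) - if Odd (Fintype.card (V i)) then 1 else 0 := by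
  cases isEmpty_or_nonempty (V i)
  · simp
  have hle := hf.sum_part_le i
  have hparity := hf.even_sum_part_iff i
  rw [Int.even_iff, Nat.even_iff] at hparity
  simp only [Nat.odd_iff]
  rcases hf.sum_part_eq_card_or_le_sub_two i with h | h <;> split_ifs <;> omega

theorem three_le_sum (hf : IsSignedDominating (completeMultipartiteGraph V) f)
    [Nonempty (Σ i, V i)]
    (hI : 2 * ((Finset.univ.filter fun i => Fintype.card (V i) = 1).card
      + (Finset.univ.filter fun i => Fintype.card (V i) = 2).card)
      ≤ (Finset.univ.filter fun i => Odd (Fintype.card (V i))).card) :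
    3 ≤ ∑ v, f v := by
  by_contra! hlt
  have hle := Finset.sum_le_sum fun i (_ : i ∈ Finset.univ) =>
    hf.sum_part_le_of_sum_le_two (by omega) i
  rw [← Fintype.sum_sigma f, Finset.sum_sub_distrib, ← Finset.mul_sum, Finset.sum_add_distrib,
    Finset.sum_boole, Finset.sum_boole, Finset.sum_boole] at hle
  have hpos := hf.sum_pos
  omega

end IsSignedDominating

theorem signedDomNum_ge_four_general (V : ι → Type*) [∀ i, Fintype (V i)] [Nonempty (Σ i, V i)]
    (heven : Even (Finset.univ.filter fun i => Odd (Fintype.card (V i))).card)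
    (hI : 2 * ((Finset.univ.filter fun i => Fintype.card (V i) = 1).card
      + (Finset.univ.filter fun i => Fintype.card (V i) = 2).card)
      ≤ (Finset.univ.filter fun i => Odd (Fintype.card (V i))).card) :
    4 ≤ signedDomNum (completeMultipartiteGraph V) := by
  refine le_signedDomNum fun f hf => ?_
  have hthree := hf.three_le_sum hI
  obtain ⟨r, hr⟩ := hf.even_sum_iff.mpr heven
  omega

end CompleteMultipartite

theorem signedDomNum_ge_four
    (k : ℕ) (hk : 2 ≤ k) (n : Fin k → ℕ) (hn : ∀ i, 0 < n i)
    (t : ℕ) (ht : t = (Finset.univ.filter fun i => Odd (n i)).card)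
    (hteven : Even t)
    (hI : 2 * ((Finset.univ.filter fun i => n i = 1).card
      + (Finset.univ.filter fun i => n i = 2).card) ≤ t) :
    4 ≤ signedDomNum (SimpleGraph.completeMultipartiteGraph fun i : Fin k => Fin (n i)) := by
  subst ht
  have : Nonempty (Σ i, Fin (n i)) := ⟨⟨0, by omega⟩, ⟨0, hn _⟩⟩
  exact signedDomNum_ge_four_general _ (by simpa using hteven) (by simpa using hI)
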